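/- Hadamard-type bound for Pfaffians of matrix kernels. Let K : ℝ × ℝ → (2×2 real matrices) be a kernel satisfying the skew-symmetry K_{ab}(x,y) = −K_{ba}(y,x) for a,b ∈ {1,2}, and suppose there exist constants C > 0 and a > b ≥ 0 such that for all x, y ∈ ℝ: |K_{11}(x,y)| ≤ C e^{−ax−ay}, |K_{12}(x,y)| ≤ C e^{−ax+by}, |K_{21}(x,y)| ≤ C e^{bx−ay}, and |K_{22}(x,y)| ≤ C e^{bx+by}. Then for every k ≥ 1 and all x_1, …, x_k ∈ ℝ, | Pf( [K(x_i, x_j)]_{i,j=1}^k ) | ≤ (2k)^{k/2} C^k ∏_{i=1}^k e^{−(a−b) x_i}, where [K(x_i,x_j)]_{i,j=1}^k denotes the 2k×2k skew-symmetric matrix whose 2×2 block in position (i,j) is K(x_i,x_j). -/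

import Mathlib

/-!
Hadamard-type bound for Pfaffians of `2×2`-matrix valued skew-symmetric kernels with
exponentially decaying entries:
`|Pf([K(x_i,x_j)]_{i,j=1}^k)| ≤ (2k)^{k/2} C^k ∏ e^{-(a-b)x_i}`.
-/

noncomputable section

/-- Pfaffian of a `2k × 2k` real matrix, via the sum over permutations. -/
def pfaffianR {k : ℕ} (A : Matrix (Fin (2*k)) (Fin (2*k)) ℝ) : ℝ :=
  (1 / (2^k * (Nat.factorial k) : ℝ)) *
    ∑ σ : Equiv.Perm (Fin (2*k)), ((Equiv.Perm.sign σ : ℤ) : ℝ) *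
      ∏ i : Fin k, A (σ ⟨2*i.1, by have := i.2; omega⟩) (σ ⟨2*i.1+1, by have := i.2; omega⟩)

/-- The `2k × 2k` matrix whose `2×2` block in position `(i,j)` is `K (x i) (x j)`. -/
def blockMatR {k : ℕ} (K : ℝ → ℝ → Matrix (Fin 2) (Fin 2) ℝ) (x : Fin k → ℝ) :
    Matrix (Fin (2*k)) (Fin (2*k)) ℝ :=
  fun r s => K (x ⟨r.1/2, by have := r.2; omega⟩) (x ⟨s.1/2, by have := s.2; omega⟩)
      ⟨r.1 % 2, by omega⟩ ⟨s.1 % 2, by omega⟩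

/-- The multilinear map `v ↦ ∏ i, B (v (i,0)) (v (i,1))`. -/
def pfMul {V : Type*} [AddCommGroup V] [Module ℝ V] (k : ℕ) (B : LinearMap.BilinForm ℝ V) :
    MultilinearMap ℝ (fun _ : Fin k × Fin 2 => V) ℝ where
  toFun v := ∏ i : Fin k, B (v (i, 0)) (v (i, 1))
  map_update_add' := by
    intro inst v p x y
    obtain ⟨j, s⟩ := p
    have key : ∀ z : V, ∏ i : Fin k, B (Function.update v (j, s) z (i, 0))
        (Function.update v (j, s) z (i, 1)) =
        B (Function.update v (j, s) z (j, 0)) (Function.update v (j, s) z (j, 1)) *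
        ∏ i ∈ Finset.univ.erase j, B (v (i, 0)) (v (i, 1)) := by
      intro z
      rw [← Finset.mul_prod_erase _ _ (Finset.mem_univ j)]
      congr 1
      refine Finset.prod_congr rfl fun i hi => ?_
      have hij : i ≠ j := Finset.ne_of_mem_erase hi
      rw [Function.update_of_ne (by simp [hij]), Function.update_of_ne (by simp [hij])]
    rw [key, key, key, ← add_mul]
    congr 1
    fin_cases s <;> simp
  map_update_smul' := by
    intro inst v p c x
    obtain ⟨j, s⟩ := p
    have key : ∀ z : V, ∏ i : Fin k, B (Function.update v (j, s) z (i, 0))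
        (Function.update v (j, s) z (i, 1)) =
        B (Function.update v (j, s) z (j, 0)) (Function.update v (j, s) z (j, 1)) *
        ∏ i ∈ Finset.univ.erase j, B (v (i, 0)) (v (i, 1)) := by
      intro z
      rw [← Finset.mul_prod_erase _ _ (Finset.mem_univ j)]
      congr 1
      refine Finset.prod_congr rfl fun i hi => ?_
      have hij : i ≠ j := Finset.ne_of_mem_erase hi
      rw [Function.update_of_ne (by simp [hij]), Function.update_of_ne (by simp [hij])]
    rw [key, key, smul_eq_mul, ← mul_assoc]
    congr 1
    fin_cases s <;> simp

/-- Unnormalised Pfaffian as an alternating map. -/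
def pfAlt {V : Type*} [AddCommGroup V] [Module ℝ V] (k : ℕ) (B : LinearMap.BilinForm ℝ V) :
    V [⋀^(Fin k × Fin 2)]→ₗ[ℝ] ℝ := (pfMul k B).alternatization

lemma pfAlt_apply {V : Type*} [AddCommGroup V] [Module ℝ V] (k : ℕ) (B : LinearMap.BilinForm ℝ V)
    (v : Fin k × Fin 2 → V) : pfAlt k B v = ∑ σ : Equiv.Perm (Fin k × Fin 2),
      ((Equiv.Perm.sign σ : ℤ) : ℝ) * ∏ i : Fin k, B (v (σ (i, 0))) (v (σ (i, 1))) := by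
  rw [pfAlt, MultilinearMap.alternatization_apply]
  refine Finset.sum_congr rfl fun σ _ => ?_
  rw [MultilinearMap.domDomCongr_apply, Units.smul_def, zsmul_eq_mul]
  rfl

/-- Existence of a basis splitting an alternating form into `2 × 2` blocks. -/
lemma exists_block_family (k : ℕ) : ∀ (V : Type) [AddCommGroup V] [Module ℝ V]
    [FiniteDimensional ℝ V] (B : LinearMap.BilinForm ℝ V), B.IsAlt →
    Module.finrank ℝ V = 2 * k →
    ∃ b : Fin k × Fin 2 → V, LinearIndependent ℝ b ∧
      ∀ i j s t, i ≠ j → B (b (i, s)) (b (j, t)) = 0 := by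
  induction k with
  | zero =>
    intro V _ _ _ B hB hV
    exact ⟨fun p => p.1.elim0, linearIndependent_empty_type, fun i => i.elim0⟩
  | succ k ih =>
    intro V _ _ _ B hB hV
    by_cases h0 : B = 0
    · have c := (Module.finBasisOfFinrankEq ℝ V hV).reindex
        (Fintype.equivOfCardEq (by simp [mul_comm]) : Fin (2 * (k+1)) ≃ Fin (k+1) × Fin 2)
      exact ⟨c, c.linearIndependent, by intros; simp [h0]⟩
    · obtain ⟨u, v, huv⟩ : ∃ u v, B u v ≠ 0 := by
        by_contra! h
        exact h0 (LinearMap.ext₂ h)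
      have hvu : B v u = - B u v := (LinearMap.IsAlt.neg hB u v).symm
      have huu : B u u = 0 := hB u
      have hvv : B v v = 0 := hB v
      let φ : V →ₗ[ℝ] ℝ × ℝ := (B u).prod (B v)
      have hφ : LinearMap.range φ = ⊤ := by
        rw [LinearMap.range_eq_top]
        rintro ⟨p, q⟩
        refine ⟨(p / B u v) • v - (q / B u v) • u, ?_⟩
        simp [φ, hvu, huu, hvv, huv]
      have hrank : Module.finrank ℝ (LinearMap.ker φ) = 2 * k := by
        have := LinearMap.finrank_range_add_finrank_ker φ
        rw [hφ, finrank_top, Module.finrank_prod, hV] at this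
        simp at this
        omega
      obtain ⟨c, hc, hc'⟩ := ih (LinearMap.ker φ) (B.restrict (LinearMap.ker φ))
        (fun x => hB x) hrank
      have hcu : ∀ p, B u (c p) = 0 := fun p => by
        have := (c p).2; simp [φ] at this; exact this.1
      have hcv : ∀ p, B v (c p) = 0 := fun p => by
        have := (c p).2; simp [φ] at this; exact this.2
      have hcu' : ∀ p, B (c p) u = 0 := fun p => by
        rw [← LinearMap.IsAlt.neg hB, hcu, neg_zero]
      have hcv' : ∀ p, B (c p) v = 0 := fun p => by
        rw [← LinearMap.IsAlt.neg hB, hcv, neg_zero]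
      refine ⟨fun p => Fin.cases (motive := fun _ => V) (![u, v] p.2)
        (fun i => (c (i, p.2) : V)) p.1, ?_, ?_⟩
      · rw [Fintype.linearIndependent_iff]
        intro g hg
        rw [Fintype.sum_prod_type, Fin.sum_univ_succ] at hg
        simp only [Fin.cases_zero, Fin.cases_succ, Fin.sum_univ_two, Matrix.cons_val_zero,
          Matrix.cons_val_one] at hg
        have h1 : g (0, 1) = 0 := by
          have := congrArg (B u) hg
          simpa [huu, hcu, huv] using this
        have h2 : g (0, 0) = 0 := by
          have := congrArg (B v) hg
          simpa [hvv, hcv, hvu, huv] using this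
        rw [h1, h2] at hg
        have h3 : ∑ p : Fin k × Fin 2, g (p.1.succ, p.2) • c p = 0 := by
          apply Subtype.ext
          rw [Fintype.sum_prod_type]
          simp only [Fin.sum_univ_two]
          simpa using hg
        have h4 := Fintype.linearIndependent_iff.1 hc _ h3
        rintro ⟨i, s⟩
        induction i using Fin.cases with
        | zero => fin_cases s <;> assumption
        | succ i => exact h4 (i, s)
      · intro i j s t hij
        induction i using Fin.cases with
        | zero =>
          induction j using Fin.cases with
          | zero => exact absurd rfl hij
          | succ j => fin_cases s <;> simp [hcu, hcv]
        | succ i =>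
          induction j using Fin.cases with
          | zero => fin_cases t <;> simp [hcu', hcv']
          | succ j => exact hc' i j s t (fun h => hij (by rw [h]))

lemma pfAlt_block_le {V : Type*} [AddCommGroup V] [Module ℝ V] (k : ℕ)
    (B : LinearMap.BilinForm ℝ V) (hB : B.IsAlt) (b : Fin k × Fin 2 → V)
    (hb : ∀ i j s t, i ≠ j → B (b (i, s)) (b (j, t)) = 0) :
    |pfAlt k B b| ≤ (2 ^ k * (Nat.factorial k) : ℝ) * ∏ i, |B (b (i, 0)) (b (i, 1))| := by
  classical
  rw [pfAlt_apply]
  let g : Equiv.Perm (Fin k) × (Fin k → Fin 2) → Equiv.Perm (Fin k × Fin 2) :=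
    fun q => Equiv.prodShear q.1 (fun i => Equiv.addRight (q.2 i))
  let S : Finset (Equiv.Perm (Fin k × Fin 2)) := Finset.univ.image g
  have hcard : (S.card : ℝ) ≤ 2 ^ k * (Nat.factorial k) := by
    have h : S.card ≤ _ := Finset.card_image_le
    rw [Finset.card_univ, Fintype.card_prod, Fintype.card_perm, Fintype.card_fun, Fintype.card_fin,
      Fintype.card_fin, mul_comm] at h
    exact_mod_cast h
  have hz : ∀ σ : Equiv.Perm (Fin k × Fin 2), σ ∉ S →
      |∏ i : Fin k, B (b (σ (i, 0))) (b (σ (i, 1)))| = 0 := by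
    intro σ hσ
    rw [abs_eq_zero, Finset.prod_eq_zero_iff]
    by_contra! h
    apply hσ
    have hπ : ∀ i, (σ (i, 0)).1 = (σ (i, 1)).1 := fun i => by
      by_contra hne
      exact h i (Finset.mem_univ i) (hb _ _ (σ (i, 0)).2 (σ (i, 1)).2 hne)
    have hs : Function.Surjective (fun i => (σ (i, 0)).1) := by
      intro j
      obtain ⟨⟨i, s⟩, hi⟩ := σ.surjective (j, 0)
      refine ⟨i, ?_⟩
      fin_cases s
      · simp at hi; simp [hi]
      · simp at hi; simp [hπ, hi]
    have hbij := Finite.surjective_iff_bijective.1 hs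
    refine Finset.mem_image.2 ⟨(Equiv.ofBijective _ hbij, fun i => (σ (i, 0)).2),
      Finset.mem_univ _, ?_⟩
    ext1 ⟨i, s⟩
    have hne : (σ (i, 0)).2 ≠ (σ (i, 1)).2 := fun he => by
      have := σ.injective (Prod.ext (hπ i) he)
      simp at this
    fin_cases s
    · simp [g]
    · refine Prod.ext ?_ ?_
      · simpa [g] using hπ i
      · simp [g]
        revert hne
        generalize (σ (i, 0)).2 = p
        generalize (σ (i, 1)).2 = q
        revert p q
        decide
  have hv : ∀ σ ∈ S, |∏ i : Fin k, B (b (σ (i, 0))) (b (σ (i, 1)))| =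
      ∏ i, |B (b (i, 0)) (b (i, 1))| := by
    intro σ hσ
    obtain ⟨⟨π, c⟩, -, rfl⟩ := Finset.mem_image.1 hσ
    rw [Finset.abs_prod, ← Equiv.prod_comp π (fun i => |B (b (i, 0)) (b (i, 1))|)]
    refine Finset.prod_congr rfl fun i _ => ?_
    simp only [g, Equiv.prodShear_apply, Equiv.coe_addRight]
    generalize c i = t
    fin_cases t
    · simp
    · simp
      rw [← LinearMap.IsAlt.neg hB, abs_neg]
  calc _ ≤ ∑ σ : Equiv.Perm (Fin k × Fin 2), |∏ i : Fin k, B (b (σ (i, 0))) (b (σ (i, 1)))| := by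
        refine (Finset.abs_sum_le_sum_abs _ _).trans (Finset.sum_le_sum fun σ _ => ?_)
        rw [abs_mul]
        rcases Int.units_eq_one_or (Equiv.Perm.sign σ) with h | h <;> simp [h]
    _ = ∑ σ ∈ S, |∏ i : Fin k, B (b (σ (i, 0))) (b (σ (i, 1)))| :=
        (Finset.sum_subset (Finset.subset_univ S) fun σ _ h => hz σ h).symm
    _ = S.card * ∏ i, |B (b (i, 0)) (b (i, 1))| := by
        rw [Finset.sum_congr rfl hv, Finset.sum_const, nsmul_eq_mul]
    _ ≤ _ := by gcongr

lemma det_block {V : Type*} [AddCommGroup V] [Module ℝ V] (k : ℕ)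
    (B : LinearMap.BilinForm ℝ V) (hB : B.IsAlt) (b : Fin k × Fin 2 → V)
    (hb : ∀ i j s t, i ≠ j → B (b (i, s)) (b (j, t)) = 0) :
    (Matrix.of fun p q => B (b p) (b q)).det = ∏ i, (B (b (i, 0)) (b (i, 1))) ^ 2 := by
  have h : (Matrix.of fun p q => B (b p) (b q)) =
      Matrix.reindex (Equiv.prodComm _ _) (Equiv.prodComm _ _) (Matrix.blockDiagonal
        (fun i : Fin k => (Matrix.of fun s t : Fin 2 => B (b (i, s)) (b (i, t))))) := by
    ext ⟨i, s⟩ ⟨j, t⟩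
    simp only [Matrix.reindex_apply, Matrix.submatrix_apply, Matrix.of_apply,
      Matrix.blockDiagonal_apply, Equiv.prodComm_symm, Equiv.prodComm_apply, Prod.swap]
    split_ifs with hij
    · rw [hij]
    · exact hb i j s t hij
  rw [h, Matrix.det_reindex_self, Matrix.det_blockDiagonal]
  refine Finset.prod_congr rfl fun i _ => ?_
  rw [Matrix.det_fin_two]
  simp only [Matrix.of_apply]
  rw [hB, ← LinearMap.IsAlt.neg hB (b (i, 0)) (b (i, 1))]
  ring

lemma pfAlt_sq_le (k : ℕ) (A : Matrix (Fin k × Fin 2) (Fin k × Fin 2) ℝ)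
    (hA : ∀ p q, A p q = - A q p) :
    (pfAlt k (Matrix.toBilin' A) (Pi.basisFun ℝ _)) ^ 2 ≤
      (2 ^ k * (Nat.factorial k) : ℝ) ^ 2 * A.det := by
  classical
  set B := Matrix.toBilin' A with hBdef
  have hB : B.IsAlt := by
    intro v
    have h1 : B v v = - B v v := by
      rw [hBdef, Matrix.toBilin'_apply]
      conv_lhs => rw [Finset.sum_comm]
      rw [← Finset.sum_neg_distrib]
      refine Finset.sum_congr rfl fun i _ => ?_
      rw [← Finset.sum_neg_distrib]
      refine Finset.sum_congr rfl fun j _ => ?_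
      rw [hA j i]; ring
    linarith
  obtain ⟨b, hli, hb⟩ := exists_block_family k (Fin k × Fin 2 → ℝ) B hB (by simp [mul_comm])
  let c : Module.Basis (Fin k × Fin 2) ℝ (Fin k × Fin 2 → ℝ) :=
    basisOfLinearIndependentOfCardEqFinrank' b hli (by simp)
  have hc : ⇑c = b := by simp [c]
  have hF := AlternatingMap.eq_smul_basis_det c (pfAlt k B)
  have hFe := congrArg (fun f => f (Pi.basisFun ℝ _)) hF
  simp only [AlternatingMap.smul_apply, smul_eq_mul] at hFe
  have hM := LinearMap.BilinForm.toMatrix_mul_basis_toMatrix c (Pi.basisFun ℝ (Fin k × Fin 2)) B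
  have hM' := congrArg Matrix.det hM
  have e1 : LinearMap.BilinForm.toMatrix (Pi.basisFun ℝ (Fin k × Fin 2)) B = A := by
    rw [LinearMap.BilinForm.toMatrix_basisFun, hBdef, LinearMap.BilinForm.toMatrix'_toBilin']
  have e2 : LinearMap.BilinForm.toMatrix c B = Matrix.of fun p q => B (b p) (b q) := by
    ext p q; simp [LinearMap.BilinForm.toMatrix_apply, hc]
  rw [e1, e2, Matrix.det_mul, Matrix.det_mul, Matrix.det_transpose, det_block k B hB b hb] at hM'
  rw [hFe, ← hM', Module.Basis.det_apply, hc]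
  have h1 := pfAlt_block_le k B hB b hb
  have h2 : (pfAlt k B b) ^ 2 ≤ (2 ^ k * (Nat.factorial k) : ℝ) ^ 2 *
      ∏ i, (B (b (i, 0)) (b (i, 1))) ^ 2 := by
    rw [← sq_abs]
    calc _ ≤ _ := pow_le_pow_left₀ (abs_nonneg _) h1 2
      _ = _ := by rw [mul_pow, ← Finset.prod_pow]; simp only [sq_abs]
  rw [mul_pow]
  calc _ ≤ _ := mul_le_mul_of_nonneg_right h2 (sq_nonneg _)
    _ = _ := by ring

lemma hadamard_det {ι : Type*} [Fintype ι] [DecidableEq ι] (A : Matrix ι ι ℝ) (C : ℝ) (h : ∀ i j, |A i j| ≤ C) :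
    |A.det| ≤ ((Fintype.card ι : ℝ) * C ^ 2) ^ ((Fintype.card ι : ℝ) / 2) := by
  let n := Fintype.card ι
  let e : ι ≃ Fin n := Fintype.equivFin ι
  let A' : Matrix (Fin n) (Fin n) ℝ := Matrix.reindex e e A
  have hdet : A'.det = A.det := Matrix.det_reindex_self e A
  have : Fact (Module.finrank ℝ (EuclideanSpace ℝ (Fin n)) = n) := ⟨by simp⟩
  let bb := EuclideanSpace.basisFun (Fin n) ℝ
  let o := bb.toBasis.orientation
  let v : Fin n → EuclideanSpace ℝ (Fin n) := fun i => WithLp.toLp 2 (A' i)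
  have h1 := o.abs_volumeForm_apply_le v
  rw [o.volumeForm_robust' bb, Module.Basis.det_apply] at h1
  have h2 : bb.toBasis.toMatrix v = A'.transpose := by
    ext i j
    simp [Module.Basis.toMatrix_apply, bb, v]
  rw [h2, Matrix.det_transpose, hdet] at h1
  refine h1.trans ?_
  have h3 : ∀ i, ‖v i‖ ≤ Real.sqrt ((n : ℝ) * C ^ 2) := by
    intro i
    rw [EuclideanSpace.norm_eq]
    apply Real.sqrt_le_sqrt
    calc _ ≤ ∑ _j : Fin n, C ^ 2 := Finset.sum_le_sum fun j _ => by
          rw [Real.norm_eq_abs]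
          exact pow_le_pow_left₀ (abs_nonneg _) (h _ _) 2
      _ = _ := by simp
  calc _ ≤ ∏ _i : Fin n, Real.sqrt ((n : ℝ) * C ^ 2) :=
        Finset.prod_le_prod (fun _ _ => norm_nonneg _) fun i _ => h3 i
    _ = _ := by
        rw [Finset.prod_const, Finset.card_univ, Fintype.card_fin, Real.sqrt_eq_rpow,
          ← Real.rpow_natCast, ← Real.rpow_mul (by positivity)]
        congr 1
        simp only [n]; ring

/-- `(i, s) ↦ 2 i + s`. -/
def pairEquiv (k : ℕ) : Fin k × Fin 2 ≃ Fin (2 * k) where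
  toFun p := ⟨2 * p.1.1 + p.2.1, by have := p.1.2; have := p.2.2; omega⟩
  invFun r := (⟨r.1 / 2, by have := r.2; omega⟩, ⟨r.1 % 2, by omega⟩)
  left_inv := by
    rintro ⟨⟨i, hi⟩, ⟨s, hs⟩⟩
    simp only [Prod.mk.injEq, Fin.mk.injEq]
    omega
  right_inv := by
    rintro ⟨r, hr⟩
    simp only [Fin.mk.injEq]
    omega

lemma pfaffianR_eq {k : ℕ} (A : Matrix (Fin (2 * k)) (Fin (2 * k)) ℝ) :
    pfaffianR A = (1 / (2 ^ k * (Nat.factorial k) : ℝ)) *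
      pfAlt k (Matrix.toBilin' (A.submatrix (pairEquiv k) (pairEquiv k))) (Pi.basisFun ℝ _) := by
  classical
  rw [pfaffianR, pfAlt_apply]
  congr 1
  refine (Fintype.sum_equiv (pairEquiv k).permCongr _ _ fun σ => ?_).symm
  rw [Equiv.Perm.sign_permCongr]
  congr 1
  refine Finset.prod_congr rfl fun i _ => ?_
  have h0 : (⟨2 * i.1, by have := i.2; omega⟩ : Fin (2 * k)) = pairEquiv k (i, 0) := rfl
  have h1 : (⟨2 * i.1 + 1, by have := i.2; omega⟩ : Fin (2 * k)) = pairEquiv k (i, 1) := rfl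
  rw [h0, h1]
  simp [Equiv.permCongr_apply, Matrix.toBilin'_single]

lemma blockMatR_submatrix {k : ℕ} (K : ℝ → ℝ → Matrix (Fin 2) (Fin 2) ℝ) (x : Fin k → ℝ)
    (p q : Fin k × Fin 2) : (blockMatR K x).submatrix (pairEquiv k) (pairEquiv k) p q =
      K (x p.1) (x q.1) p.2 q.2 := by
  have hp := (pairEquiv k).symm_apply_apply p
  have hq := (pairEquiv k).symm_apply_apply q
  conv_rhs => rw [← hp, ← hq]
  rfl

/-- **Hadamard-type bound for Pfaffians of matrix kernels.** -/
theorem pfaffian_hadamard_bound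
    (K : ℝ → ℝ → Matrix (Fin 2) (Fin 2) ℝ)
    (hskew : ∀ x y : ℝ, ∀ a b : Fin 2, K x y a b = - K y x b a)
    (C a b : ℝ) (hC : 0 < C) (hb : 0 ≤ b) (hab : b < a)
    (h11 : ∀ x y : ℝ, |K x y 0 0| ≤ C * Real.exp (-a*x - a*y))
    (h12 : ∀ x y : ℝ, |K x y 0 1| ≤ C * Real.exp (-a*x + b*y))
    (h21 : ∀ x y : ℝ, |K x y 1 0| ≤ C * Real.exp (b*x - a*y))
    (h22 : ∀ x y : ℝ, |K x y 1 1| ≤ C * Real.exp (b*x + b*y)) :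
    ∀ k : ℕ, 1 ≤ k → ∀ x : Fin k → ℝ,
      |pfaffianR (blockMatR K x)|
        ≤ (2*(k:ℝ))^((k:ℝ)/2) * C^k * ∏ i : Fin k, Real.exp (-(a-b) * x i) := by
  intro k hk x
  set A := (blockMatR K x).submatrix (pairEquiv k) (pairEquiv k) with hAdef
  have hA : ∀ p q, A p q = K (x p.1) (x q.1) p.2 q.2 := blockMatR_submatrix K x
  let d : Fin k × Fin 2 → ℝ := fun p => Real.exp (![-a * x p.1, b * x p.1] p.2)
  have hd : ∀ p, 0 < d p := fun p => Real.exp_pos _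
  have hbound : ∀ p q, |A p q| ≤ d p * d q * C := by
    rintro ⟨i, s⟩ ⟨j, t⟩
    rw [hA]
    simp only [d, ← Real.exp_add]
    rw [mul_comm]
    fin_cases s <;> fin_cases t
    · have h := h11 (x i) (x j)
      simpa [sub_eq_add_neg] using h
    · have h := h12 (x i) (x j)
      simpa [sub_eq_add_neg] using h
    · have h := h21 (x i) (x j)
      simpa [sub_eq_add_neg] using h
    · have h := h22 (x i) (x j)
      simpa [sub_eq_add_neg] using h
  let M : Matrix (Fin k × Fin 2) (Fin k × Fin 2) ℝ := Matrix.of fun p q => A p q / (d p * d q)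
  have hM : ∀ p q, |M p q| ≤ C := by
    intro p q
    have h := mul_pos (hd p) (hd q)
    simp only [M, Matrix.of_apply, abs_div, abs_of_pos h]
    rw [div_le_iff₀ h, mul_comm]
    exact hbound p q
  have hAM : A = Matrix.of fun p q => d q * (Matrix.of fun p q => d p * M p q) p q := by
    ext p q
    have := (hd p).ne'
    have := (hd q).ne'
    simp only [M, Matrix.of_apply]
    field_simp
  have hdet : A.det = (∏ p, d p) ^ 2 * M.det := by
    conv_lhs => rw [hAM]
    rw [Matrix.det_mul_row, Matrix.det_mul_column]
    ring
  have hprod : ∏ p, d p = ∏ i : Fin k, Real.exp (-(a - b) * x i) := by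
    rw [Fintype.prod_prod_type]
    refine Finset.prod_congr rfl fun i _ => ?_
    rw [Fin.prod_univ_two]
    simp only [d, ← Real.exp_add]
    congr 1
    simp
    ring
  have hH := hadamard_det M C hM
  have hcard : ((Fintype.card (Fin k × Fin 2) : ℕ) : ℝ) = 2 * k := by
    simp [mul_comm]
  rw [hcard, show (2 * (k : ℝ)) / 2 = (k : ℝ) by ring, Real.rpow_natCast] at hH
  have hS := pfAlt_sq_le k A (fun p q => by rw [hA, hA]; exact hskew _ _ _ _)
  rw [pfaffianR_eq, ← hAdef]
  set N : ℝ := 2 ^ k * (Nat.factorial k) with hN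
  have hNpos : 0 < N := by positivity
  set F := pfAlt k (Matrix.toBilin' A) (Pi.basisFun ℝ _)
  have hP : 0 ≤ ∏ i : Fin k, Real.exp (-(a - b) * x i) := by positivity
  refine abs_le_of_sq_le_sq (?_ : _ ^ 2 ≤ _ ^ 2) (by positivity)
  have hr : ((2 * (k : ℝ)) ^ ((k : ℝ) / 2)) ^ 2 = (2 * (k : ℝ)) ^ k := by
    rw [← Real.rpow_natCast, ← Real.rpow_mul (by positivity), ← Real.rpow_natCast]
    congr 1
    push_cast
    ring
  rw [mul_pow, mul_pow, mul_pow, hr, ← hprod]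
  calc (1 / N) ^ 2 * F ^ 2 ≤ (1 / N) ^ 2 * (N ^ 2 * A.det) := by gcongr
    _ = A.det := by field_simp
    _ = (∏ p, d p) ^ 2 * M.det := hdet
    _ ≤ (∏ p, d p) ^ 2 * (2 * (k : ℝ) * C ^ 2) ^ k := by
        gcongr
        exact (le_abs_self _).trans hH
    _ = _ := by rw [mul_pow]; ring

end
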